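/- Let n ≥ 3 and let P be a simple graph on Fin n with no isolated vertices having exactly s connected components, each of which is either a single edge or a path on 3 vertices (having 2 edges). Then the number of Hamiltonian cycles H on Fin n with P ≤ H is at most 2^s · (s-1)!. -/

import Mathlib

/-!
Adding to `P` a further edge of a Hamiltonian cycle `H ≥ P` merges two components unless it closes
the cycle, so the count goes by induction. The quantity tracked is not the number of components but
the set `D` of vertices of degree one, for a graph `P` whose degrees all lie in `{1, 2}`; a disjoint union
of `s` paths has `|D| = 2 s`.

Fix `v ∈ D`. Every Hamiltonian cycle `H ≥ P` has exactly one edge `vw` at `v` outside `P`, and then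
`w ∈ D`. By the handshake lemma, the component of `v` contains another vertex `u ∈ D`. If `w = u`,
the edge `vu` closes a path of `P` to a cycle inside `H`, which must be all of `H`, so
`D = {u, v}` (`deg_ne_one_of_closing`). Hence, if `2 < |D| ≤ 2 t + 4`, at most `2 t + 2` choices
of `w` remain, and for each of them `P + vw` has the degree-one vertices `D \ {v, w}`. This gives
at most `2 ^ t * t!` Hamiltonian cycles when `|D| ≤ 2 (t + 1)` (`ncard_ham_le`).

For the graphs in the theorem, every component has at most two vertices of degree one, so
`|D| ≤ 2 s`, and the bound holds even with `2 ^ (s - 1)` in place of `2 ^ s`.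
-/

open SimpleGraph

/-- The degree of a vertex `v` in a simple graph `G` on `Fin n`. -/
noncomputable def deg {n : ℕ} (G : SimpleGraph (Fin n)) (v : Fin n) : ℕ :=
  Nat.card (G.neighborSet v)

/-- A Hamiltonian cycle on `Fin n`: a connected, 2-regular simple graph. -/
def IsHamCycle {n : ℕ} (G : SimpleGraph (Fin n)) : Prop :=
  G.Connected ∧ ∀ v, deg G v = 2

/-- A family of graphs is degree-doubling if the union of any two distinct
members has a vertex of degree 4. -/
def DegreeDoubling {n : ℕ} (𝒢 : Finset (SimpleGraph (Fin n))) : Prop :=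
  ∀ F ∈ 𝒢, ∀ G ∈ 𝒢, F ≠ G → ∃ v, deg (F ⊔ G) v = 4

/-- The number of edges of `P` lying in the connected component `c`. -/
noncomputable def compEdgeCount {n : ℕ} (P : SimpleGraph (Fin n))
    (c : P.ConnectedComponent) : ℕ :=
  Nat.card {e : Sym2 (Fin n) // e ∈ P.edgeSet ∧ ∀ v ∈ e, P.connectedComponentMk v = c}

lemma deg_eq_ncard {n : ℕ} (G : SimpleGraph (Fin n)) (v : Fin n) :
    deg G v = (G.neighborSet v).ncard := rfl

lemma eq_of_le_of_deg {n : ℕ} {G H : SimpleGraph (Fin n)} (h : G ≤ H)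
    (hd : ∀ v, deg H v ≤ deg G v) : G = H := by
  ext a b
  have : G.neighborSet a = H.neighborSet a :=
    Set.eq_of_subset_of_ncard_le (fun _ hx => h hx) (hd a) (Set.toFinite _)
  exact Set.ext_iff.1 this b

lemma deg_sup_edge_self {n : ℕ} {P : SimpleGraph (Fin n)} {v w : Fin n} (hvw : v ≠ w)
    (h : ¬ P.Adj v w) : deg (P ⊔ edge v w) v = deg P v + 1 := by
  have : (P ⊔ edge v w).neighborSet v = insert w (P.neighborSet v) := by
    ext x
    simp only [mem_neighborSet, sup_adj, edge_adj, Set.mem_insert_iff]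
    grind
  rw [deg_eq_ncard, this, Set.ncard_insert_of_notMem (by simpa using h), deg_eq_ncard]

lemma deg_sup_edge_of_ne {n : ℕ} {P : SimpleGraph (Fin n)} {v w x : Fin n} (hv : x ≠ v)
    (hw : x ≠ w) : deg (P ⊔ edge v w) x = deg P x := by
  have : (P ⊔ edge v w).neighborSet x = P.neighborSet x := by
    ext y
    simp only [mem_neighborSet, sup_adj, edge_adj]
    grind
  rw [deg_eq_ncard, this, deg_eq_ncard]

lemma deg_lt_of_new {n : ℕ} {P H : SimpleGraph (Fin n)} (h : P ≤ H) {v w : Fin n}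
    (hH : H.Adj v w) (hP : ¬ P.Adj v w) : deg P v < deg H v := by
  refine Set.ncard_lt_ncard ⟨fun _ hx => h hx, fun hs => hP (hs ?_)⟩ (Set.toFinite _)
  exact hH

lemma exists_new {n : ℕ} {P H : SimpleGraph (Fin n)} {v : Fin n}
    (hv : deg P v < deg H v) : ∃ w, H.Adj v w ∧ ¬ P.Adj v w := by
  obtain ⟨w, hw, hw'⟩ := Set.exists_mem_notMem_of_ncard_lt_ncard hv (Set.toFinite _)
  exact ⟨w, hw, hw'⟩

/-- If an edge `vu` of a Hamiltonian cycle joins two vertices already connected in `P`, it closes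
the whole cycle, so every vertex other than `u` and `v` has its two neighbours already in `P`. -/
lemma deg_ne_one_of_closing {n : ℕ} {P H : SimpleGraph (Fin n)} (hH : IsHamCycle H) (hPH : P ≤ H)
    {u v : Fin n} (huv : P.Reachable u v) (hadj : H.Adj v u) (hnP : ¬ P.Adj v u) (x : Fin n)
    (hxu : x ≠ u) (hxv : x ≠ v) : deg P x ≠ 1 := by
  classical
  obtain ⟨p, hp⟩ := huv.exists_isPath
  let q : H.Walk u v := p.mapLe hPH
  have hq : q.IsPath := hp.mapLe hPH
  have hvu : s(v, u) ∉ q.edges := by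
    intro h
    have : s(v, u) ∈ p.edges := by simpa [q] using h
    exact hnP (p.adj_of_mem_edges this)
  let c : H.Walk v v := Walk.cons hadj q
  have hc : c.IsCycle := (Walk.cons_isCycle_iff q hadj).2 ⟨hq, hvu⟩
  have hnb : ∀ y ∈ c.support, c.toSubgraph.neighborSet y = H.neighborSet y := by
    intro y hy
    refine Set.eq_of_subset_of_ncard_le (fun z hz => c.toSubgraph.adj_sub hz) ?_ (Set.toFinite _)
    rw [hc.ncard_neighborSet_toSubgraph_eq_two hy, ← deg_eq_ncard, hH.2]
  have hclosed : ∀ y z, H.Reachable y z → y ∈ c.support → z ∈ c.support := by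
    rintro y z ⟨r⟩
    induction r with
    | nil => exact id
    | @cons a b d hab r ih =>
      intro ha
      refine ih ?_
      have : b ∈ c.toSubgraph.neighborSet a := by rw [hnb a ha]; exact hab
      exact c.mem_verts_toSubgraph.1 (c.toSubgraph.edge_vert (Subgraph.Adj.symm this))
  have hx : x ∈ c.support := hclosed v x (hH.1.preconnected v x) c.start_mem_support
  have hsub : H.neighborSet x ⊆ P.neighborSet x := by
    rw [← hnb x hx]
    intro y hy
    have hy' : s(x, y) ∈ c.edges := c.mem_edges_toSubgraph.1 hy
    have : s(x, y) ∈ p.edges := by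
      simp only [c, q, Walk.edges_cons, List.mem_cons, Walk.edges_mapLe_eq_edges] at hy'
      rcases hy' with h | h
      · rw [Sym2.eq_iff] at h
        grind
      · exact h
    exact p.adj_of_mem_edges this
  have h2 : deg H x ≤ deg P x := Set.ncard_le_ncard hsub (Set.toFinite _)
  rw [hH.2] at h2
  omega

/-- The handshake lemma within the component of `v`. -/
lemma exists_other_end {n : ℕ} {P : SimpleGraph (Fin n)} (hP : ∀ x, deg P x = 1 ∨ deg P x = 2)
    {v : Fin n} (hv : deg P v = 1) : ∃ u, u ≠ v ∧ deg P u = 1 ∧ P.Reachable u v := by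
  classical
  -- `Q` keeps exactly the edges of the component of `v`.
  let Q : SimpleGraph (Fin n) :=
    { Adj := fun x y => P.Adj x y ∧ P.Reachable x v
      symm := ⟨fun x y h => ⟨h.1.symm, h.1.symm.reachable.trans h.2⟩⟩
      loopless := ⟨fun x h => P.loopless.irrefl x h.1⟩ }
  have hdeg : ∀ x, Q.degree x = if P.Reachable x v then deg P x else 0 := by
    intro x
    have h0 : Q.degree x = (Q.neighborSet x).ncard := by
      rw [← card_neighborSet_eq_degree, ← Nat.card_eq_fintype_card]; rfl
    rw [h0]
    split_ifs with h
    · rw [deg_eq_ncard]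
      congr 1
      ext y
      simp [Q, h]
    · rw [Set.ncard_eq_zero (Set.toFinite _)]
      ext y
      simp [Q, h]
  obtain ⟨u, huv, hu⟩ := Q.exists_ne_odd_degree_of_exists_odd_degree v (by
    rw [hdeg, if_pos (Reachable.refl v), hv]; exact odd_one)
  rw [hdeg] at hu
  split_ifs at hu with h
  · refine ⟨u, huv, ?_, h⟩
    rcases hP u with h1 | h1
    · exact h1
    · rw [h1] at hu
      exact absurd hu (by decide)
  · exact absurd hu (by decide)

/-- A graph with degrees in `{1, 2}` and at most `2 (t + 1)` vertices of degree one lies in at most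
`2 ^ t * t!` Hamiltonian cycles. -/
lemma ncard_ham_le {n : ℕ} (t : ℕ) : ∀ P : SimpleGraph (Fin n),
    (∀ x, deg P x = 1 ∨ deg P x = 2) → {x | deg P x = 1}.ncard ≤ 2 * (t + 1) →
    {H : SimpleGraph (Fin n) | IsHamCycle H ∧ P ≤ H}.ncard ≤ 2 ^ t * t.factorial := by
  classical
  -- A graph without vertices of degree one is the only candidate itself.
  have hreg : ∀ P : SimpleGraph (Fin n), (∀ x, deg P x = 2) →
      {H : SimpleGraph (Fin n) | IsHamCycle H ∧ P ≤ H}.ncard ≤ 1 := by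
    intro P hP
    rw [Set.ncard_le_one (Set.toFinite _)]
    rintro A ⟨hA, hPA⟩ B ⟨hB, hPB⟩
    rw [← eq_of_le_of_deg hPA fun v => by rw [hA.2, hP],
      ← eq_of_le_of_deg hPB fun v => by rw [hB.2, hP]]
  -- Facts about the extension of `P` by the new edge at `v`.
  have hext : ∀ (P H : SimpleGraph (Fin n)) (v w : Fin n), (∀ x, deg P x = 1 ∨ deg P x = 2) →
      IsHamCycle H → P ≤ H → H.Adj v w → ¬ P.Adj v w → deg P w = 1 ∧ P ⊔ edge v w ≤ H := by
    intro P H v w hP hH hPH ha hn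
    have h := deg_lt_of_new hPH ha.symm (fun h => hn h.symm)
    rw [hH.2] at h
    refine ⟨by have := hP w; omega, sup_le hPH ?_⟩
    intro x y hxy
    rw [edge_adj] at hxy
    rcases hxy with ⟨⟨rfl, rfl⟩ | ⟨rfl, rfl⟩, -⟩
    exacts [ha, ha.symm]
  have hdeg : ∀ (P : SimpleGraph (Fin n)) (v w : Fin n), v ≠ w → ¬ P.Adj v w →
      deg P v = 1 → deg P w = 1 → ∀ x,
      deg (P ⊔ edge v w) x = if x = v ∨ x = w then 2 else deg P x := by
    intro P v w hvw hn hv hw x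
    split_ifs with h
    · rcases h with rfl | rfl
      · rw [deg_sup_edge_self hvw hn, hv]
      · rw [edge_comm, deg_sup_edge_self hvw.symm fun h => hn h.symm, hw]
    · exact deg_sup_edge_of_ne (fun h' => h (Or.inl h')) (fun h' => h (Or.inr h'))
  have hpos : ∀ t : ℕ, 1 ≤ 2 ^ t * t.factorial := fun t => Nat.mul_pos (by positivity) t.factorial_pos
  induction t with
  | zero =>
    intro P hP hD
    simp only [pow_zero, Nat.factorial_zero, mul_one, zero_add] at hD ⊢
    by_cases hall : ∀ x, deg P x = 2
    · exact hreg P hall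
    push Not at hall
    obtain ⟨v, hv⟩ := hall
    replace hv : deg P v = 1 := by have := hP v; omega
    rw [Set.ncard_le_one (Set.toFinite _)]
    obtain ⟨u, huv, hu, -⟩ := exists_other_end hP hv
    have hDeq : ({v, u} : Set (Fin n)) = {x | deg P x = 1} := by
      refine Set.eq_of_subset_of_ncard_le ?_ ?_ (Set.toFinite _)
      · rintro x (rfl | rfl)
        exacts [hv, hu]
      · rwa [Set.ncard_pair huv.symm]
    have key : ∀ H, IsHamCycle H → P ≤ H → P ⊔ edge v u = H := by
      intro H hH hPH
      obtain ⟨w, ha, hn⟩ := exists_new (P := P) (H := H) (v := v) (by rw [hv, hH.2]; decide)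
      obtain ⟨hw, hle⟩ := hext P H v w hP hH hPH ha hn
      have hwm : w ∈ ({v, u} : Set (Fin n)) := by rw [hDeq]; exact hw
      have hwu : w = u := by
        rcases hwm with h | h
        · exact absurd h ha.ne'
        · exact h
      subst hwu
      refine eq_of_le_of_deg hle fun x => ?_
      rw [hH.2, hdeg P v w ha.ne hn hv hw]
      split_ifs with h
      · exact le_rfl
      · rcases hP x with h1 | h1
        · have : x ∈ ({v, w} : Set (Fin n)) := by rw [hDeq]; exact h1
          exact absurd this h
        · exact h1.ge
    rintro A ⟨hA, hPA⟩ B ⟨hB, hPB⟩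
    rw [← key A hA hPA, ← key B hB hPB]
  | succ t ih =>
    intro P hP hD
    by_cases hall : ∀ x, deg P x = 2
    · exact (hreg P hall).trans (hpos _)
    push Not at hall
    obtain ⟨v, hv⟩ := hall
    replace hv : deg P v = 1 := by have := hP v; omega
    obtain ⟨u, huv, hu, hreach⟩ := exists_other_end hP hv
    have hfac : 2 ^ (t + 1) * (t + 1).factorial = (2 * (t + 1)) * (2 ^ t * t.factorial) := by
      rw [Nat.factorial_succ]; ring
    by_cases hsmall : {x | deg P x = 1}.ncard ≤ 2 * (t + 1)
    · refine (ih P hP hsmall).trans ?_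
      rw [hfac]
      exact Nat.le_mul_of_pos_left _ (by positivity)
    -- There is a third vertex of degree one, so the new edge at `v` cannot end in `u`.
    have hthird : ∃ x, deg P x = 1 ∧ x ≠ u ∧ x ≠ v := by
      by_contra! hcon
      have hsub : {x | deg P x = 1} ⊆ {u, v} := by
        intro x hx
        by_cases h : x = u
        · exact Or.inl h
        · exact Or.inr (hcon x hx h)
      have := Set.ncard_le_ncard hsub (Set.toFinite _)
      rw [Set.ncard_pair huv] at this
      omega
    obtain ⟨x, hx, hxu, hxv⟩ := hthird
    let D : Set (Fin n) := {x | deg P x = 1}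
    have hremove : ∀ a b : Fin n, a ≠ b → a ∈ D → b ∈ D → (D \ {a, b}).ncard ≤ 2 * (t + 1) := by
      intro a b hab ha hb
      rw [Set.ncard_sdiff (by rintro z (rfl | rfl); exacts [ha, hb]) (Set.toFinite _),
        Set.ncard_pair hab]
      have : D.ncard ≤ 2 * (t + 1 + 1) := hD
      omega
    let T : Finset (Fin n) := (D \ {u, v}).toFinset.filter fun w => ¬ P.Adj v w
    have hT : T.card ≤ 2 * (t + 1) := by
      refine (Finset.card_filter_le _ _).trans ?_
      rw [← Set.ncard_eq_toFinset_card']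
      exact hremove u v huv hu hv
    have hcover : {H : SimpleGraph (Fin n) | IsHamCycle H ∧ P ≤ H} ⊆
        ⋃ w ∈ T, {H : SimpleGraph (Fin n) | IsHamCycle H ∧ P ⊔ edge v w ≤ H} := by
      rintro H ⟨hH, hPH⟩
      obtain ⟨w, ha, hn⟩ := exists_new (P := P) (H := H) (v := v) (by rw [hv, hH.2]; decide)
      obtain ⟨hw, hle⟩ := hext P H v w hP hH hPH ha hn
      have hwu : w ≠ u := by
        rintro rfl
        exact deg_ne_one_of_closing hH hPH hreach ha hn x hxu hxv hx
      have hwT : w ∈ T := by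
        simp only [T, Finset.mem_filter, Set.mem_toFinset]
        refine ⟨⟨hw, ?_⟩, hn⟩
        rintro (h | h)
        exacts [hwu h, ha.ne' h]
      exact Set.mem_biUnion hwT ⟨hH, hle⟩
    have hbound : ∀ w ∈ T, {H : SimpleGraph (Fin n) | IsHamCycle H ∧ P ⊔ edge v w ≤ H}.ncard ≤
        2 ^ t * t.factorial := by
      intro w hwT
      simp only [T, Finset.mem_filter, Set.mem_toFinset] at hwT
      obtain ⟨⟨hw, hne⟩, hn⟩ := hwT
      have hvw : v ≠ w := fun h => hne (Or.inr h.symm)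
      have hd := hdeg P v w hvw hn hv hw
      refine ih _ (fun y => ?_) ?_
      · rw [hd]
        split_ifs
        exacts [Or.inr rfl, hP y]
      · refine (Set.ncard_le_ncard ?_ (Set.toFinite _)).trans (hremove v w hvw hv hw)
        intro y hy
        rw [Set.mem_ofPred_eq, hd] at hy
        split_ifs at hy with h
        · exact absurd hy (by decide)
        · exact ⟨hy, h⟩
    calc _ ≤ _ := Set.ncard_le_ncard hcover (Set.toFinite _)
      _ ≤ ∑ w ∈ T, {H : SimpleGraph (Fin n) | IsHamCycle H ∧ P ⊔ edge v w ≤ H}.ncard :=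
        Finset.set_ncard_biUnion_le _ _
      _ ≤ T.card * (2 ^ t * t.factorial) := by
        simpa using Finset.sum_le_card_nsmul _ _ _ hbound
      _ ≤ _ := by
        rw [hfac]
        exact Nat.mul_le_mul_right _ hT

theorem stmt_9 (n : ℕ) (hn : 3 ≤ n) (s : ℕ) (P : SimpleGraph (Fin n))
    (hiso : ∀ v, deg P v ≠ 0)
    (hcomp : Nat.card P.ConnectedComponent = s)
    (hshape : ∀ c : P.ConnectedComponent,
      Nat.card c.supp = 2 ∨ (Nat.card c.supp = 3 ∧ compEdgeCount P c = 2)) :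
    Nat.card {H : SimpleGraph (Fin n) // IsHamCycle H ∧ P ≤ H}
      ≤ 2 ^ s * Nat.factorial (s - 1) := by
  classical
  have hsupp : ∀ c : P.ConnectedComponent, c.supp.ncard ≤ 3 := by
    intro c
    have := hshape c
    rw [Nat.card_coe_set_eq] at this
    omega
  have hP : ∀ x, deg P x = 1 ∨ deg P x = 2 := by
    intro x
    have hlt : deg P x < (P.connectedComponentMk x).supp.ncard := by
      refine Set.ncard_lt_ncard ⟨fun y hy => ?_, fun hs => ?_⟩ (Set.toFinite _)
      · exact ConnectedComponent.sound (Adj.reachable hy).symm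
      · exact P.loopless.irrefl x (hs (show x ∈ (P.connectedComponentMk x).supp from rfl))
    have := hsupp (P.connectedComponentMk x)
    have := hiso x
    omega
  -- Three vertices of degree one in one component would contradict the handshake lemma.
  have hends : ∀ c : P.ConnectedComponent, {x ∈ c.supp | deg P x = 1}.ncard ≤ 2 := by
    intro c
    by_contra! hcon
    have heq : {x ∈ c.supp | deg P x = 1} = c.supp :=
      Set.eq_of_subset_of_ncard_le (Set.sep_subset _ _) ((hsupp c).trans hcon) (Set.toFinite _)
    have hone : ∀ x ∈ c.supp, deg P x = 1 := fun x hx => by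
      rw [← heq] at hx
      exact hx.2
    have hcard : c.supp.ncard = 3 := le_antisymm (hsupp c) (by rw [heq] at hcon; exact hcon)
    -- `Q` keeps exactly the edges of the component `c`.
    let Q : SimpleGraph (Fin n) :=
      { Adj := fun x y => P.Adj x y ∧ x ∈ c.supp
        symm := ⟨fun x y h => ⟨h.1.symm,
          (ConnectedComponent.sound h.1.reachable.symm).trans h.2⟩⟩
        loopless := ⟨fun x h => P.loopless.irrefl x h.1⟩ }
    have hdeg : ∀ x, Q.degree x = if x ∈ c.supp then 1 else 0 := by
      intro x
      have h0 : Q.degree x = (Q.neighborSet x).ncard := by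
        rw [← card_neighborSet_eq_degree, ← Nat.card_eq_fintype_card]; rfl
      rw [h0]
      split_ifs with h
      · rw [← hone x h, deg_eq_ncard]
        congr 1
        ext y
        simpa [Q] using fun _ => h
      · rw [Set.ncard_eq_zero (Set.toFinite _)]
        ext y
        simpa [Q] using fun _ => h
    have heven := Q.even_card_odd_degree_vertices
    have hset : (Finset.univ.filter fun x => Odd (Q.degree x)) = c.supp.toFinset := by
      ext x
      simp only [Finset.mem_filter, Finset.mem_univ, true_and, Set.mem_toFinset, hdeg]
      split_ifs with h <;> simp [h]
    rw [hset, ← Set.ncard_eq_toFinset_card', hcard] at heven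
    exact absurd heven (by decide)
  have hD : {x | deg P x = 1}.ncard ≤ 2 * s := by
    have : Fintype P.ConnectedComponent := Fintype.ofFinite _
    rw [← hcomp, Nat.card_eq_fintype_card, Set.ncard_eq_toFinset_card']
    refine Finset.card_le_mul_card_image_of_maps_to (f := P.connectedComponentMk)
      (fun _ _ => Finset.mem_univ _) 2 fun c _ => ?_
    refine le_of_eq_of_le ?_ (hends c)
    rw [Set.ncard_eq_toFinset_card']
    congr 1
    ext x
    simp [and_comm]
  have hs : 0 < s := by
    have : Nonempty P.ConnectedComponent := ⟨P.connectedComponentMk ⟨0, by omega⟩⟩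
    rw [← hcomp]
    exact Nat.card_pos
  obtain ⟨t, rfl⟩ : ∃ t, s = t + 1 := ⟨s - 1, by omega⟩
  calc _ ≤ 2 ^ t * t.factorial := ncard_ham_le t P hP hD
    _ ≤ _ := Nat.mul_le_mul (Nat.pow_le_pow_right (by decide) (by omega)) le_rfl
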